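/- arXiv:2401.03613 — 9 statements merged into one kernel-verified Lean document; each statement's English description precedes it below -/
import Mathlib

section
/- Let β', λ, c_a, c_f be positive reals and define the pull-based threshold cost C(τ) = ( β'·λ·c_a·τ²/2 + c_f ) / ( τ + 1/β' ) for τ ≥ 0. Then C attains its minimum over [0,∞) at τ* = (1/β')·( √(1 + 2·β'·c_f/(c_a·λ)) − 1 ), and the minimum value equals C(τ*) = c_a·λ·( √(1 + 2·β'·c_f/(c_a·λ)) − 1 ). -/
/-- Long-run average cost of the threshold-`τ` pull-based caching policy, where
`β'` is the item's request rate, `λ` the update rate, `c_a` the aging cost and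
`c_f` the fetching cost. -/
noncomputable def pullCost (β' lam ca cf : ℝ) (τ : ℝ) : ℝ :=
  (β' * lam * ca * τ ^ 2 / 2 + cf) / (τ + 1 / β')

/-- Completing the square: if `s ^ 2 = 1 + 2 β' c_f / (c_a λ)`, the cost exceeds
`c_a λ (s - 1)` by a nonnegative term vanishing at `β' τ + 1 = s`. -/
lemma pullCost_eq_add_sq_div {β' lam ca cf s τ : ℝ} (hβ' : 0 < β') (hlam : 0 < lam)
    (hca : 0 < ca) (hs : s ^ 2 = 1 + 2 * β' * cf / (ca * lam)) (hτ : 0 < β' * τ + 1) :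
    pullCost β' lam ca cf τ =
      ca * lam * (s - 1) + ca * lam * (β' * τ + 1 - s) ^ 2 / (2 * (β' * τ + 1)) := by
  have hcf : cf = ca * lam * (s ^ 2 - 1) / (2 * β') := by
    rw [hs]
    field_simp
    ring
  have hden : τ + 1 / β' = (β' * τ + 1) / β' := by
    field_simp
  rw [pullCost, hden, hcf]
  field_simp
  ring

theorem pull_cost_optimal_threshold
    (β' lam ca cf : ℝ) (hβ' : 0 < β') (hlam : 0 < lam) (hca : 0 < ca) (hcf : 0 < cf) :
    (∀ τ : ℝ, 0 ≤ τ →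
        pullCost β' lam ca cf
            ((1 / β') * (Real.sqrt (1 + 2 * β' * cf / (ca * lam)) - 1)) ≤
          pullCost β' lam ca cf τ) ∧
      pullCost β' lam ca cf ((1 / β') * (Real.sqrt (1 + 2 * β' * cf / (ca * lam)) - 1)) =
        ca * lam * (Real.sqrt (1 + 2 * β' * cf / (ca * lam)) - 1) := by
  have hs : Real.sqrt (1 + 2 * β' * cf / (ca * lam)) ^ 2 = 1 + 2 * β' * cf / (ca * lam) :=
    Real.sq_sqrt (by positivity)
  have hpos : 0 < Real.sqrt (1 + 2 * β' * cf / (ca * lam)) := Real.sqrt_pos.2 (by positivity)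
  generalize Real.sqrt (1 + 2 * β' * cf / (ca * lam)) = s at hs hpos ⊢
  have hopt : β' * (1 / β' * (s - 1)) + 1 = s := by
    field_simp
    ring
  have hmin : pullCost β' lam ca cf (1 / β' * (s - 1)) = ca * lam * (s - 1) := by
    rw [pullCost_eq_add_sq_div hβ' hlam hca hs (by rwa [hopt]), hopt]
    simp
  refine ⟨fun τ hτ => ?_, hmin⟩
  rw [hmin, pullCost_eq_add_sq_div hβ' hlam hca hs (by positivity)]
  exact le_add_of_nonneg_right (by positivity)
end

section
/- Let β, p, λ, c_a, c_f be positive reals with 8·λ·c_f > β·p·c_a. Set F = β·p/(2λ) and G = 4·c_f/c_a, and define C^E = c_a·λ·( √(1 + 2·β·p·c_f/(λ·c_a)) − 1 ) and C^B = √(2·λ·β·p·c_a·c_f) − (1/2)·β·p·c_a. Then C^B > 0 and (C^E − C^B)/C^B = ( √(1+G·F) − 1 )/( √(G·F) − F ) − 1. -/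
theorem push_pull_relative_cost_reduction
    (β p lam ca cf : ℝ) (hβ : 0 < β) (hp : 0 < p) (hlam : 0 < lam)
    (hca : 0 < ca) (hcf : 0 < cf) (h : 8 * lam * cf > β * p * ca) :
    let F : ℝ := β * p / (2 * lam)
    let G : ℝ := 4 * cf / ca
    let CE : ℝ := ca * lam * (Real.sqrt (1 + 2 * β * p * cf / (lam * ca)) - 1)
    let CB : ℝ := Real.sqrt (2 * lam * β * p * ca * cf) - (1/2) * β * p * ca
    0 < CB ∧
      (CE - CB) / CB = (Real.sqrt (1 + G * F) - 1) / (Real.sqrt (G * F) - F) - 1 := by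
  intro F G CE CB
  have hCB_pos : 0 < CB := by
    refine sub_pos.mpr (Real.lt_sqrt_of_sq_lt ?_)
    have hX : 0 < β * p * ca := by positivity
    nlinarith [mul_lt_mul_of_pos_left h hX]
  have hGF : 2 * β * p * cf / (lam * ca) = G * F := by
    simp only [G, F]
    field_simp
    ring
  have hsqrt : Real.sqrt (2 * lam * β * p * ca * cf) = ca * lam * Real.sqrt (G * F) := by
    have hsq : 2 * lam * β * p * ca * cf = (ca * lam) ^ 2 * (G * F) := by
      rw [← hGF]
      field_simp
    rw [hsq, Real.sqrt_mul (by positivity), Real.sqrt_sq (by positivity)]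
  have hCB : CB = ca * lam * (Real.sqrt (G * F) - F) := by
    have hF : (1/2) * β * p * ca = ca * lam * F := by
      simp only [F]
      field_simp
    simp only [CB]
    rw [hsqrt, hF, mul_sub]
  have hCE : CE = ca * lam * (Real.sqrt (1 + G * F) - 1) := by
    simp only [CE]
    rw [hGF]
  refine ⟨hCB_pos, ?_⟩
  rw [sub_div, div_self hCB_pos.ne', hCE, hCB, mul_div_mul_left _ _ (by positivity)]
end

section
/- For every real G > 9/8, there exists a real F with 1/2 < F < 1 satisfying F³ − 4(1+G)·F² + 4(1+2G)·F − 4G = 0. Consequently, the zero-gain threshold f* = 2F satisfies 1 < f* < 2. -/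
theorem zero_gain_threshold_exists (G : ℝ) (hG : 9 / 8 < G) :
    ∃ F : ℝ, 1 / 2 < F ∧ F < 1 ∧
      F ^ 3 - 4 * (1 + G) * F ^ 2 + 4 * (1 + 2 * G) * F - 4 * G = 0 ∧
      1 < 2 * F ∧ 2 * F < 2 := by
  have hcont : ContinuousOn
      (fun F : ℝ => F ^ 3 - 4 * (1 + G) * F ^ 2 + 4 * (1 + 2 * G) * F - 4 * G)
      (Set.Icc (1 / 2) 1) := by fun_prop
  obtain ⟨F, ⟨hF, hF'⟩, hroot⟩ := intermediate_value_Ioo (by norm_num) hcont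
    (show (0 : ℝ) ∈ Set.Ioo _ _ from ⟨by linarith, by linarith⟩)
  exact ⟨F, hF, hF', hroot, by linarith, by linarith⟩
end

section
/- Let β, p, λ, c_a, c_f be positive reals with 4·c_f/c_a > 9/8 and β·p ≤ λ. Then c_a·λ·( √(1 + 2·β·p·c_f/(λ·c_a)) − 1 ) < √(2·λ·β·p·c_a·c_f) − (1/2)·β·p·c_a; that is, the optimal pull-based caching cost is strictly smaller than the optimal push-based caching cost. -/
/-- The inequality in dimensionless form, with `x = t ^ 2` the demand-to-update ratio. -/
theorem sqrt_one_add_sq_lt_of_three_quarters_mul_lt {s t : ℝ} (ht : 0 < t) (ht1 : t ≤ 1)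
    (hs : 3 / 4 * t < s) : Real.sqrt (1 + s ^ 2) < s + 1 - t ^ 2 / 2 := by
  have ht2 : t ^ 2 ≤ 1 := by nlinarith
  rw [Real.sqrt_lt' (by nlinarith)]
  have hlin : 0 < (s - 3 / 4 * t) * (2 - t ^ 2) := mul_pos (by linarith) (by linarith)
  have hcubic : 0 ≤ t * ((1 - t) * (6 + 2 * t - t ^ 2)) :=
    mul_nonneg ht.le (mul_nonneg (by linarith) (by linarith))
  nlinarith

theorem pull_beats_push_of_low_demand
    (β p lam ca cf : ℝ) (hβ : 0 < β) (hp : 0 < p) (hlam : 0 < lam)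
    (hca : 0 < ca) (hcf : 0 < cf) (hG : 4 * cf / ca > 9 / 8) (h : β * p ≤ lam) :
    ca * lam * (Real.sqrt (1 + 2 * β * p * cf / (lam * ca)) - 1) <
      Real.sqrt (2 * lam * β * p * ca * cf) - (1/2) * β * p * ca := by
  have hx : 0 < β * p / lam := by positivity
  have hu : 0 < 2 * β * p * cf / (lam * ca) := by positivity
  have hxu : (3 / 4) ^ 2 * (β * p / lam) < 2 * β * p * cf / (lam * ca) := by
    have hsplit : 2 * β * p * cf / (lam * ca) = (β * p / lam) * (4 * cf / ca) / 2 := by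
      field_simp
      ring
    rw [hsplit]
    nlinarith
  have hpush : Real.sqrt (2 * lam * β * p * ca * cf) =
      ca * lam * Real.sqrt (2 * β * p * cf / (lam * ca)) := by
    rw [← Real.sqrt_sq (by positivity : 0 ≤ ca * lam), ← Real.sqrt_mul (by positivity)]
    congr 1
    field_simp
  have hst : 3 / 4 * Real.sqrt (β * p / lam) < Real.sqrt (2 * β * p * cf / (lam * ca)) := by
    apply Real.lt_sqrt_of_sq_lt
    rwa [mul_pow, Real.sq_sqrt hx.le]
  have hmain := sqrt_one_add_sq_lt_of_three_quarters_mul_lt (Real.sqrt_pos.2 hx)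
    (Real.sqrt_le_one.2 ((div_le_one hlam).2 h)) hst
  rw [Real.sq_sqrt hu.le, Real.sq_sqrt hx.le] at hmain
  have hage : (1/2) * β * p * ca = ca * lam * (β * p / lam / 2) := by
    field_simp
  rw [hpush, hage, ← mul_sub]
  exact mul_lt_mul_of_pos_left (by linarith) (by positivity)
end

section
/- Let β, p, λ, c_a, c_f be positive reals with β·p ≥ 2·λ. Then √(2·λ·β·p·c_a·c_f) − (1/2)·β·p·c_a < c_a·λ·( √(1 + 2·β·p·c_f/(λ·c_a)) − 1 ); that is, the optimal push-based caching cost is strictly smaller than the optimal pull-based caching cost. -/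
theorem push_beats_pull_of_high_demand
    (β p lam ca cf : ℝ) (hβ : 0 < β) (hp : 0 < p) (hlam : 0 < lam)
    (hca : 0 < ca) (hcf : 0 < cf) (h : β * p ≥ 2 * lam) :
    Real.sqrt (2 * lam * β * p * ca * cf) - (1/2) * β * p * ca <
      ca * lam * (Real.sqrt (1 + 2 * β * p * cf / (lam * ca)) - 1) := by
  have hpull : ca * lam * Real.sqrt (1 + 2 * β * p * cf / (lam * ca)) =
      Real.sqrt ((ca * lam) ^ 2 + 2 * lam * β * p * ca * cf) := by
    rw [← Real.sqrt_sq (by positivity : 0 ≤ ca * lam), ← Real.sqrt_mul (by positivity),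
      Real.sqrt_sq (by positivity : 0 ≤ ca * lam)]
    congr 1
    field_simp
  have hlt : Real.sqrt (2 * lam * β * p * ca * cf) <
      Real.sqrt ((ca * lam) ^ 2 + 2 * lam * β * p * ca * cf) :=
    Real.sqrt_lt_sqrt (by positivity) (lt_add_of_pos_left _ (by positivity))
  have haging : 2 * lam * ca ≤ β * p * ca := mul_le_mul_of_nonneg_right h hca.le
  rw [mul_sub, hpull]
  linarith
end

section
/- Let w, c_f > 0 and q ∈ [0,1). Define v : ℕ → (ℕ → ℝ) by v₀(Δ) = 0 for all Δ, and v_m(Δ) = min( w·Δ + q·v_{m−1}(Δ+1), c_f + q·v_{m−1}(1) ) for m ≥ 1. Then for every m ≥ 0, the function Δ ↦ v_m(Δ) is nondecreasing on ℕ. -/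
/-- Value-iteration iterates for the discounted push-based caching problem:
`pushValue w cf q m Δ` is the `m`-step value at age `Δ`, where `w = β·p·c_a` is the
per-step expected aging cost rate, `cf` the fetching cost and `q` the discount factor. -/
noncomputable def pushValue (w cf q : ℝ) : ℕ → ℕ → ℝ
  | 0, _ => 0
  | m + 1, Δ =>
      min (w * (Δ : ℝ) + q * pushValue w cf q m (Δ + 1))
          (cf + q * pushValue w cf q m 1)

theorem pushValue_monotone (w cf q : ℝ) (hw : 0 < w) (hcf : 0 < cf)
    (hq0 : 0 ≤ q) (hq1 : q < 1) :
    ∀ m : ℕ, Monotone (fun Δ : ℕ => pushValue w cf q m Δ) := by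
  intro m
  induction m with
  | zero => exact fun a b _ => by simp [pushValue]
  | succ m ih =>
    intro a b hab
    have hnext : pushValue w cf q m (a + 1) ≤ pushValue w cf q m (b + 1) :=
      ih (Nat.add_le_add_right hab 1)
    simp only [pushValue]
    gcongr
end

section
/- Let w, c_f > 0 and q ∈ [0,1), and define v₀(Δ) = 0 and v_m(Δ) = min( w·Δ + q·v_{m−1}(Δ+1), c_f + q·v_{m−1}(1) ) for m ≥ 1, Δ ∈ ℕ. Then for every m ≥ 1 the set { Δ ∈ ℕ : c_f + q·v_{m−1}(1) < w·Δ + q·v_{m−1}(Δ+1) } is upward closed in ℕ; equivalently, there exists a threshold η_m ∈ ℕ ∪ {∞} such that the update action strictly attains the minimum in v_m(Δ) exactly when Δ > η_m. -/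
/-- The value-iteration iterates are monotone in the age. -/
theorem pushValue_monotone_s9 {w q : ℝ} (cf : ℝ) (hw : 0 ≤ w) (hq : 0 ≤ q) (m : ℕ) :
    Monotone (pushValue w cf q m) := by
  induction m with
  | zero => exact fun _ _ _ => le_rfl
  | succ m ih =>
    intro a b hab
    have hv : pushValue w cf q m (a + 1) ≤ pushValue w cf q m (b + 1) := ih (by gcongr)
    simp only [pushValue]
    gcongr

/-- For each horizon `m ≥ 1`, the set of ages at which the update action strictly
attains the minimum in the value iteration is upward closed in `ℕ`; equivalently,
updating is strictly optimal exactly above a threshold `η_m ∈ ℕ ∪ {∞}`. -/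
theorem pushValue_update_set_upward_closed (w cf q : ℝ) (hw : 0 < w) (hcf : 0 < cf)
    (hq0 : 0 ≤ q) (hq1 : q < 1) :
    ∀ m : ℕ, 1 ≤ m → ∀ Δ Δ' : ℕ, Δ ≤ Δ' →
      cf + q * pushValue w cf q (m - 1) 1 <
          w * (Δ : ℝ) + q * pushValue w cf q (m - 1) (Δ + 1) →
        cf + q * pushValue w cf q (m - 1) 1 <
          w * (Δ' : ℝ) + q * pushValue w cf q (m - 1) (Δ' + 1) := by
  intro m _ a b hab h
  have hv : pushValue w cf q (m - 1) (a + 1) ≤ pushValue w cf q (m - 1) (b + 1) :=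
    pushValue_monotone_s9 cf hw.le hq0 (m - 1) (by gcongr)
  refine h.trans_le ?_
  gcongr
end

section
/- Let λ, c_a, c_f > 0 and γ ∈ [0,1). Define v : ℕ → (ℝ≥0 → ℝ) by v₀(s) = 0 for all s ≥ 0, and v_m(s) = min( λ·c_a·s + γ·v_{m−1}(s+1), c_f + γ·v_{m−1}(1) ) for m ≥ 1. Then for every m ≥ 0, the function s ↦ v_m(s) is nondecreasing on [0,∞). In particular v₁(s) = λ·c_a·s for s ≤ c_f/(λ·c_a) and v₁(s) = c_f for s > c_f/(λ·c_a). -/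
/-- Value-iteration iterates for the discounted pull-based caching problem restricted to
request epochs: `pullValue lam ca cf γ m s` is the `m`-step value when the elapsed time
since the last cache update is `s`, with update rate `lam`, aging cost `ca`, fetching
cost `cf` and discount factor `γ`. -/
noncomputable def pullValue (lam ca cf γ : ℝ) : ℕ → ℝ → ℝ
  | 0, _ => 0
  | m + 1, s =>
      min (lam * ca * s + γ * pullValue lam ca cf γ m (s + 1))
          (cf + γ * pullValue lam ca cf γ m 1)

theorem pullValue_monotone (lam ca cf γ : ℝ) (hlam : 0 < lam) (hca : 0 < ca)
    (hcf : 0 < cf) (hγ0 : 0 ≤ γ) (hγ1 : γ < 1) :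
    (∀ m : ℕ, ∀ s s' : ℝ, 0 ≤ s → s ≤ s' →
        pullValue lam ca cf γ m s ≤ pullValue lam ca cf γ m s') ∧
      (∀ s : ℝ, 0 ≤ s → s ≤ cf / (lam * ca) →
        pullValue lam ca cf γ 1 s = lam * ca * s) ∧
      (∀ s : ℝ, cf / (lam * ca) < s → pullValue lam ca cf γ 1 s = cf) := by
  have hpos : 0 < lam * ca := mul_pos hlam hca
  refine ⟨fun m => ?_, fun s _ hs => ?_, fun s hs => ?_⟩
  · induction m with
    | zero => intro s s' _ _; simp [pullValue]
    | succ m ih =>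
      intro s s' hs hss'
      have hnext := ih (s + 1) (s' + 1) (by linarith) (by linarith)
      simp only [pullValue]
      gcongr
  · rw [le_div_iff₀ hpos] at hs
    simp only [pullValue, mul_zero, add_zero]
    exact min_eq_left (by linarith)
  · rw [div_lt_iff₀ hpos] at hs
    simp only [pullValue, mul_zero, add_zero]
    exact min_eq_right (by linarith)
end

section
/- Let λ, c_a, c_f > 0 and γ ∈ [0,1), and define v₀(s) = 0 and v_m(s) = min( λ·c_a·s + γ·v_{m−1}(s+1), c_f + γ·v_{m−1}(1) ) for m ≥ 1, s ≥ 0. Then for every m ≥ 1 the set { s ∈ [0,∞) : c_f + γ·v_{m−1}(1) < λ·c_a·s + γ·v_{m−1}(s+1) } is upward closed in [0,∞); equivalently, there exists a threshold τ_m ∈ [0,∞] such that the fetch action strictly attains the minimum in v_m(s) exactly when s > τ_m. -/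
/-- The value iterates are nondecreasing in the elapsed time. -/
theorem pullValue_monotone_s13 {lam ca γ : ℝ} (cf : ℝ) (h : 0 ≤ lam * ca) (hγ : 0 ≤ γ) (m : ℕ) :
    Monotone (pullValue lam ca cf γ m) := by
  induction m with
  | zero => exact fun _ _ _ => le_rfl
  | succ m ih =>
    intro s t hst
    have hv : pullValue lam ca cf γ m (s + 1) ≤ pullValue lam ca cf γ m (t + 1) :=
      ih (by gcongr)
    simp only [pullValue]
    gcongr

/-- For each horizon `m ≥ 1`, the set of elapsed times at which the fetch action
strictly attains the minimum in the value iteration is upward closed in `[0,∞)`;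
equivalently, fetching is strictly optimal exactly above a threshold `τ_m ∈ [0,∞]`. -/
theorem pullValue_fetch_set_upward_closed (lam ca cf γ : ℝ) (hlam : 0 < lam)
    (hca : 0 < ca) (hcf : 0 < cf) (hγ0 : 0 ≤ γ) (hγ1 : γ < 1) :
    ∀ m : ℕ, 1 ≤ m → ∀ s s' : ℝ, 0 ≤ s → s ≤ s' →
      cf + γ * pullValue lam ca cf γ (m - 1) 1 <
          lam * ca * s + γ * pullValue lam ca cf γ (m - 1) (s + 1) →
        cf + γ * pullValue lam ca cf γ (m - 1) 1 <
          lam * ca * s' + γ * pullValue lam ca cf γ (m - 1) (s' + 1) := by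
  intro m _ s s' _ hss' hfetch
  have hv : pullValue lam ca cf γ (m - 1) (s + 1) ≤ pullValue lam ca cf γ (m - 1) (s' + 1) :=
    pullValue_monotone_s13 cf (by positivity) hγ0 (m - 1) (by gcongr)
  exact hfetch.trans_le (by gcongr)
end
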